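/- Let 1 ≤ v ≤ m, let B ⊆ ℒ^{mn} be a ball of radius ρ₀, let μ_{v-1} > 0, and let B'' ⊆ B be a ball such that ‖M_{v-1}(A)‖_∞ > ρ₀ μ_{v-1} M_{v-2}(B'') for every A ∈ B''. If B' ⊆ B'' is a ball of radius ρ(B') < (1/2) μ_{v-1} ρ(B''), then ‖M_{v-1}(A')‖_∞ > (1/2) M_{v-1}(B') for every A' ∈ B'. -/

import Mathlib

/-!
Common setup: the field `ℒ = 𝔽((X⁻¹))` of formal Laurent series with coefficients
in a finite field `𝔽` of `k` elements.  We realize `ℒ` as `LaurentSeries 𝔽`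
(Hahn series over `ℤ`) in the variable `T = X⁻¹`, so that `X` corresponds to `T⁻¹`
and the polynomial ring `𝔽[X]` corresponds to series supported on nonpositive
exponents.  The absolute value of `x = Σ_{i ≤ N} a_i X^i` (with `a_N ≠ 0`) is
`k^N`, i.e. `k^(-order x)` in terms of the `T`-adic order.
-/

open scoped Classical ENNReal NNReal
open MeasureTheory

noncomputable section

namespace FSBad

/-- The field `ℒ = 𝔽((X⁻¹))`. -/
abbrev L (𝔽 : Type) [Field 𝔽] : Type := LaurentSeries 𝔽

variable {𝔽 : Type} [Field 𝔽] [Fintype 𝔽]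

/-- The absolute value `‖·‖` on `ℒ`: `‖x‖ = k^(deg_X x)`, `‖0‖ = 0`. -/
def lnorm (x : L 𝔽) : ℝ := if x = 0 then 0 else (Fintype.card 𝔽 : ℝ) ^ (-x.order)

/-- Membership in the polynomial ring `𝔽[X] ⊆ ℒ` (polynomials in `X = T⁻¹`). -/
def IsPoly (x : L 𝔽) : Prop := ∀ i : ℤ, 0 < i → x.coeff i = 0

/-- The height (sup-norm) `‖·‖_∞` on `ℒ^ι`. -/
def vnorm {ι : Type*} (x : ι → L 𝔽) : ℝ := ⨆ i, lnorm (x i)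

/-- The closed ball in `ℒ^ι` with centre `c` and radius `ρ`. -/
def vball {ι : Type*} (c : ι → L 𝔽) (ρ : ℝ) : Set (ι → L 𝔽) :=
  {x | vnorm (fun i => x i - c i) ≤ ρ}

/-- `m × n` matrices over `ℒ`, identified with `ℒ^(mn)`. -/
abbrev Mat (𝔽 : Type) [Field 𝔽] (m n : ℕ) : Type := Matrix (Fin m) (Fin n) (L 𝔽)

/-- The height of a matrix, i.e. the sup-norm on `ℒ^(mn)`. -/
def mnorm {m n : ℕ} (A : Mat 𝔽 m n) : ℝ := ⨆ p : Fin m × Fin n, lnorm (A p.1 p.2)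

/-- The closed ball in `ℒ^(mn)` with centre `c` and radius `ρ`. -/
def mball {m n : ℕ} (c : Mat 𝔽 m n) (ρ : ℝ) : Set (Mat 𝔽 m n) :=
  {A | mnorm (A - c) ≤ ρ}

/-- The distance `⟨x⟩` from `x ∈ ℒ^h` to the polynomial lattice `𝔽[X]^h`. -/
def latDist {h : ℕ} (x : Fin h → L 𝔽) : ℝ :=
  sInf {r : ℝ | ∃ p : Fin h → L 𝔽, (∀ i, IsPoly (p i)) ∧ r = vnorm (fun i => x i - p i)}

/-- The set `𝔅(m,n)` of badly approximable systems of `m` linear forms in `n`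
variables over `ℒ`. -/
def Bad (𝔽 : Type) [Field 𝔽] [Fintype 𝔽] (m n : ℕ) : Set (Mat 𝔽 m n) :=
  {A | ∃ K : ℝ, 0 < K ∧ ∀ q : Fin m → L 𝔽, (∀ i, IsPoly (q i)) → q ≠ 0 →
    latDist (Matrix.vecMul q A) ^ n > K / vnorm q ^ m}

/-- The Hausdorff `s`-measure of `E ⊆ ℒ^(mn)`, defined through countable covers by
balls of radii `< δ`, letting `δ → 0` (the infimum over `δ`-covers is nonincreasing
in `δ`, so the limit is the supremum over `δ > 0`). -/
def hMeasure {m n : ℕ} (s : ℝ) (E : Set (Mat 𝔽 m n)) : ℝ≥0∞ :=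
  ⨆ (δ : ℝ) (_ : 0 < δ),
    ⨅ (c : ℕ → Mat 𝔽 m n) (ρ : ℕ → ℝ) (_ : ∀ i, 0 < ρ i ∧ ρ i < δ)
      (_ : E ⊆ ⋃ i, mball (c i) (ρ i)), ∑' i, ENNReal.ofReal (ρ i ^ s)

/-- The Hausdorff dimension of `E ⊆ ℒ^(mn)`. -/
def hdim {m n : ℕ} (E : Set (Mat 𝔽 m n)) : ℝ :=
  sInf {s : ℝ | 0 ≤ s ∧ hMeasure s E = 0}

/-! ### Schmidt `(α,β)`-games on `ℒ^(mn)` -/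

/-- A formal ball: an element of `Ω = ℒ^(mn) × ℝ`. -/
structure FBall (𝔽 : Type) [Field 𝔽] (m n : ℕ) where
  /-- centre -/
  c : Mat 𝔽 m n
  /-- radius -/
  r : ℝ

/-- Formal inclusion of formal balls: `(c₁,ρ₁) ⊆ (c₂,ρ₂)` iff `ρ₁ + ‖c₁ - c₂‖_∞ ≤ ρ₂`. -/
def FBall.ssub {m n : ℕ} (B₁ B₂ : FBall 𝔽 m n) : Prop :=
  B₁.r + mnorm (B₁.c - B₂.c) ≤ B₂.r

/-- The subset of `ℒ^(mn)` determined by a formal ball. -/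
def FBall.toSet {m n : ℕ} (B : FBall 𝔽 m n) : Set (Mat 𝔽 m n) := mball B.c B.r

/-- A strategy for White: given the balls `B₁, …, B_{i+1}` chosen by Black so far,
produce White's next ball. -/
abbrev Strategy (𝔽 : Type) [Field 𝔽] (m n : ℕ) : Type :=
  (i : ℕ) → (Fin (i + 1) → FBall 𝔽 m n) → FBall 𝔽 m n

/-- White's move at stage `i` when following strategy `str` against Black's balls `B`. -/
def wMove {m n : ℕ} (str : Strategy 𝔽 m n) (B : ℕ → FBall 𝔽 m n) (i : ℕ) : FBall 𝔽 m n :=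
  str i fun j => B j.1

/-- Black's move `B_{j+2}` is legal (for parameter `β`): it is a formal subset of
White's ball `W_{j+1}` and has radius `β · ρ(W_{j+1})`. -/
def BlackOk {m n : ℕ} (β : ℝ) (str : Strategy 𝔽 m n) (B : ℕ → FBall 𝔽 m n) (j : ℕ) : Prop :=
  (B (j + 1)).ssub (wMove str B j) ∧ (B (j + 1)).r = β * (wMove str B j).r

/-- White's move `W_{i+1}` is legal (for parameter `α`): it is a formal subset of
Black's ball `B_{i+1}` and has radius `α · ρ(B_{i+1})`. -/
def WhiteOk {m n : ℕ} (α : ℝ) (str : Strategy 𝔽 m n) (B : ℕ → FBall 𝔽 m n) (i : ℕ) : Prop :=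
  (wMove str B i).ssub (B i) ∧ (wMove str B i).r = α * (B i).r

/-- `str` is a winning strategy for White in the `(α,β;S)`-game: against any
sequence of Black balls, White's moves are legal as long as Black has played
legally so far, and if the whole play is legal then the intersection of the
chosen balls is contained in `S`. -/
def WinningStrategy {m n : ℕ} (α β : ℝ) (S : Set (Mat 𝔽 m n)) (str : Strategy 𝔽 m n) : Prop :=
  ∀ B : ℕ → FBall 𝔽 m n, 0 ≤ (B 0).r →
    (∀ i, (∀ j < i, BlackOk β str B j) → WhiteOk α str B i) ∧
    ((∀ j, BlackOk β str B j) → (⋂ i, (B i).toSet) ⊆ S)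

/-- `S` is `(α,β)`-winning. -/
def IsWinningAB {m n : ℕ} (α β : ℝ) (S : Set (Mat 𝔽 m n)) : Prop :=
  ∃ str : Strategy 𝔽 m n, WinningStrategy α β S str

/-- `S` is `α`-winning. -/
def IsWinningA {m n : ℕ} (α : ℝ) (S : Set (Mat 𝔽 m n)) : Prop :=
  ∀ β : ℝ, 0 < β → β < 1 → IsWinningAB α β S

/-- The winning dimension of `S` (a supremum of a set of reals, which is `0` by
convention when the set is empty). -/
def windim {m n : ℕ} (S : Set (Mat 𝔽 m n)) : ℝ :=
  sSup {α : ℝ | 0 < α ∧ α < 1 ∧ IsWinningA α S}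

/-! ### The matrices `Ā`, `Ā^*` and the quantities `M_v`, `D_v`, `∇D_v` -/

/-- `Ā = [[A, I_m], [I_n, 0]]`. Rows are indexed by `Fin m ⊕ Fin n`
(coordinates `q_1, …, q_{m+n}`), columns by `Fin n ⊕ Fin m`. -/
def Abar {m n : ℕ} (A : Mat 𝔽 m n) : Matrix (Fin m ⊕ Fin n) (Fin n ⊕ Fin m) (L 𝔽) :=
  Matrix.fromBlocks A 1 1 0

/-- `Ā^* = [[Aᵀ, I_n], [I_m, 0]]`. Rows are indexed by `Fin n ⊕ Fin m`,
columns by `Fin m ⊕ Fin n`. -/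
def AbarStar {m n : ℕ} (A : Mat 𝔽 m n) : Matrix (Fin n ⊕ Fin m) (Fin m ⊕ Fin n) (L 𝔽) :=
  Matrix.fromBlocks A.transpose 1 1 0

/-- The standard bilinear form `x·y = Σ_i x_i y_i` on `ℒ^ι`. -/
def dotL {ι : Type*} [Fintype ι] (x y : ι → L 𝔽) : L 𝔽 := ∑ i, x i * y i

/-- Strictly increasing `v`-tuples `1 ≤ i_1 < ⋯ < i_v ≤ m`. -/
def IncTuple (v m : ℕ) : Type := {f : Fin v → Fin m // StrictMono f}

/-- The vector `M_v(A) ∈ ℒ^(C(m,v)²)` of the determinants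
`det (y_{i_r} · C_{j_s}(Ā^*))_{1 ≤ r,s ≤ v}` over all strictly increasing index
tuples.  (For `v = 0` every coordinate is an empty determinant, i.e. `1`.) -/
def MvVec {m n : ℕ} (y : Fin m → (Fin n ⊕ Fin m → L 𝔽)) (v : ℕ) (A : Mat 𝔽 m n) :
    IncTuple v m × IncTuple v m → L 𝔽 := fun p =>
  Matrix.det (Matrix.of fun r s : Fin v =>
    dotL (y (p.1.1 r)) fun t => AbarStar A t (Sum.inl (p.2.1 s)))

/-- `‖M_v(A)‖_∞`. -/
def MvNorm {m n : ℕ} (y : Fin m → (Fin n ⊕ Fin m → L 𝔽)) (v : ℕ) (A : Mat 𝔽 m n) : ℝ :=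
  vnorm (MvVec y v A)

/-- `M_v(K) = max_{A ∈ K} ‖M_v(A)‖_∞` for `K ⊆ ℒ^(mn)`. -/
def MvSet {m n : ℕ} (y : Fin m → (Fin n ⊕ Fin m → L 𝔽)) (v : ℕ) (K : Set (Mat 𝔽 m n)) : ℝ :=
  sSup {r : ℝ | ∃ A ∈ K, r = MvNorm y v A}

/-- `D_v(A) = det (y_h · C_l(Ā^*))_{1 ≤ h,l ≤ v}`. -/
def Dv {m n : ℕ} (y : Fin m → (Fin n ⊕ Fin m → L 𝔽)) (v : ℕ) (hv : v ≤ m)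
    (A : Mat 𝔽 m n) : L 𝔽 :=
  Matrix.det (Matrix.of fun h l : Fin v =>
    dotL (y (Fin.castLE hv h)) fun t => AbarStar A t (Sum.inl (Fin.castLE hv l)))

/-- The discrete gradient `∇D_v(A) ∈ ℒ^(mn)`, with coordinates
`D_v(A + E_{ij}) - D_v(A)`. -/
def gradDv {m n : ℕ} (y : Fin m → (Fin n ⊕ Fin m → L 𝔽)) (v : ℕ) (hv : v ≤ m)
    (A : Mat 𝔽 m n) : Fin m × Fin n → L 𝔽 := fun p =>
  Dv y v hv (A + Matrix.single p.1 p.2 1) - Dv y v hv A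

/-- `y_1, …, y_m ∈ ℒ^(m+n)` form an orthonormal system: `y_h · y_{h'} = δ_{h h'}`
and `‖t_1 y_1 + ⋯ + t_m y_m‖_∞ = max_h ‖t_h‖`. -/
def OrthoSystem {m n : ℕ} (y : Fin m → (Fin n ⊕ Fin m → L 𝔽)) : Prop :=
  (∀ h h', dotL (y h) (y h') = if h = h' then 1 else 0) ∧
  (∀ t : Fin m → L 𝔽, vnorm (fun r => ∑ h, t h * y h r) = ⨆ h, lnorm (t h))

/-! ### Distance functions, parallelepipeds and successive minima -/

/-- The `j`-th successive minimum of a distance function `F` on `ℒ^N`: the infimum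
of all `λ > 0` such that `{F < λ}` contains `j` linearly independent points of
`𝔽[X]^N`. -/
def succMin {N : ℕ} (F : (Fin N → L 𝔽) → ℝ) (j : ℕ) : ℝ :=
  sInf {lam : ℝ | 0 < lam ∧ ∃ v : Fin j → (Fin N → L 𝔽),
    (∀ r, ∀ i, IsPoly (v r i)) ∧ LinearIndependent (L 𝔽) v ∧ ∀ r, F (v r) < lam}

/-- The distance function `F_A(x) = max_j c_j⁻¹ ‖Σ_i x_i a_{ij}‖`. -/
def FA {N : ℕ} (A : Matrix (Fin N) (Fin N) (L 𝔽)) (c : Fin N → ℝ)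
    (x : Fin N → L 𝔽) : ℝ :=
  ⨆ j, (c j)⁻¹ * lnorm (∑ i, x i * A i j)

/-- The parallelepiped `P_A(λ) = {x ∈ ℒ^N : F_A(x) < λ}`. -/
def PA {N : ℕ} (A : Matrix (Fin N) (Fin N) (L 𝔽)) (c : Fin N → ℝ) (lam : ℝ) :
    Set (Fin N → L 𝔽) := {x | FA A c x < lam}

/-- The polar distance function `F_A^*(y) = sup_{x ≠ 0} ‖x·y‖ / F_A(x)`. -/
def FAstar {N : ℕ} (A : Matrix (Fin N) (Fin N) (L 𝔽)) (c : Fin N → ℝ)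
    (y : Fin N → L 𝔽) : ℝ :=
  ⨆ x : {x : Fin N → L 𝔽 // x ≠ 0}, lnorm (dotL x.1 y) / FA A c x.1

/-! ### Haar measure, characterized by translation invariance and normalization -/

/-- The Borel σ-algebra on `ℒ^N`, generated by the balls. -/
def vecSigma (𝔽 : Type) [Field 𝔽] [Fintype 𝔽] (N : ℕ) : MeasurableSpace (Fin N → L 𝔽) :=
  MeasurableSpace.generateFrom {s | ∃ c ρ, (0 : ℝ) < ρ ∧ s = vball c ρ}

/-- `μ` is the Haar measure on `ℒ^N`: translation invariant and normalized so that
the unit ball `I^N` has measure `1` (these properties determine it uniquely). -/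
def IsHaarVec {N : ℕ} (μ : @Measure (Fin N → L 𝔽) (vecSigma 𝔽 N)) : Prop :=
  (∀ (v : Fin N → L 𝔽) (s : Set (Fin N → L 𝔽)), μ ((fun x => x + v) ⁻¹' s) = μ s) ∧
  μ {x | ∀ i, lnorm (x i) < 1} = 1

/-- The Borel σ-algebra on `ℒ^(mn)`, generated by the balls. -/
def matSigma (𝔽 : Type) [Field 𝔽] [Fintype 𝔽] (m n : ℕ) : MeasurableSpace (Mat 𝔽 m n) :=
  MeasurableSpace.generateFrom {s | ∃ c ρ, (0 : ℝ) < ρ ∧ s = mball c ρ}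

/-- `μ` is the Haar measure on `ℒ^(mn)`: translation invariant and normalized so
that the unit ball `I^(mn)` has measure `1`. -/
def IsHaarMat {m n : ℕ} (μ : @Measure (Mat 𝔽 m n) (matSigma 𝔽 m n)) : Prop :=
  (∀ (v : Mat 𝔽 m n) (s : Set (Mat 𝔽 m n)), μ ((fun x => x + v) ⁻¹' s) = μ s) ∧
  μ {A | ∀ i j, lnorm (A i j) < 1} = 1

/-! ### The constants of Section 3 -/

/-- `τ = m/(m+n)`. -/
def tau (m n : ℕ) : ℝ := m / (m + n)

/-- `δ = R^(-m(m+n)²)`. -/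
def del (R : ℝ) (m n : ℕ) : ℝ := R ^ (-((m : ℝ) * ((m : ℝ) + n) ^ 2))

/-- `δ* = R^(-n(m+n)²)`. -/
def delStar (R : ℝ) (m n : ℕ) : ℝ := R ^ (-((n : ℝ) * ((m : ℝ) + n) ^ 2))

section helpers

lemma one_lt_k : (1:ℝ) < (Fintype.card 𝔽 : ℝ) := by
  exact_mod_cast Fintype.one_lt_card (α := 𝔽)

lemma k_pos : (0:ℝ) < (Fintype.card 𝔽 : ℝ) := lt_trans zero_lt_one (one_lt_k (𝔽 := 𝔽))

lemma lnorm_zero : lnorm (0 : L 𝔽) = 0 := by simp [lnorm]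

lemma lnorm_of_ne {x : L 𝔽} (h : x ≠ 0) : lnorm x = (Fintype.card 𝔽 : ℝ) ^ (-x.order) := by
  simp [lnorm, h]

lemma lnorm_pos {x : L 𝔽} (h : x ≠ 0) : 0 < lnorm x := by
  rw [lnorm_of_ne h]; exact zpow_pos k_pos _

lemma lnorm_nonneg (x : L 𝔽) : 0 ≤ lnorm x := by
  by_cases h : x = 0
  · rw [h, lnorm_zero]
  · exact (lnorm_pos h).le

lemma lnorm_one : lnorm (1 : L 𝔽) = 1 := by
  rw [lnorm_of_ne one_ne_zero]; simp

lemma lnorm_mul (x y : L 𝔽) : lnorm (x * y) = lnorm x * lnorm y := by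
  by_cases hx : x = 0
  · simp [hx, lnorm_zero]
  by_cases hy : y = 0
  · simp [hy, lnorm_zero]
  rw [lnorm_of_ne hx, lnorm_of_ne hy, lnorm_of_ne (mul_ne_zero hx hy),
    HahnSeries.order_mul hx hy, neg_add, zpow_add₀ k_pos.ne']

lemma lnorm_neg (x : L 𝔽) : lnorm (-x) = lnorm x := by
  simp [lnorm]

lemma lnorm_add_le {x y : L 𝔽} {R : ℝ} (hx : lnorm x ≤ R) (hy : lnorm y ≤ R) :
    lnorm (x + y) ≤ R := by
  by_cases hx0 : x = 0
  · simpa [hx0] using hy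
  by_cases hy0 : y = 0
  · simpa [hy0] using hx
  by_cases h : x + y = 0
  · rw [h, lnorm_zero]; exact (lnorm_nonneg x).trans hx
  have := HahnSeries.min_order_le_order_add h
  rw [lnorm_of_ne h]
  rw [lnorm_of_ne hx0] at hx
  rw [lnorm_of_ne hy0] at hy
  rcases min_le_iff.1 this with h1 | h1
  · exact (zpow_le_zpow_right₀ one_lt_k.le (neg_le_neg h1)).trans hx
  · exact (zpow_le_zpow_right₀ one_lt_k.le (neg_le_neg h1)).trans hy

lemma lnorm_sub_le {x y : L 𝔽} {R : ℝ} (hx : lnorm x ≤ R) (hy : lnorm y ≤ R) :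
    lnorm (x - y) ≤ R := by
  rw [sub_eq_add_neg]; exact lnorm_add_le hx (by rwa [lnorm_neg])

lemma lnorm_sum_le {ι : Type*} (s : Finset ι) (f : ι → L 𝔽) {R : ℝ} (hR : 0 ≤ R)
    (h : ∀ i ∈ s, lnorm (f i) ≤ R) : lnorm (∑ i ∈ s, f i) ≤ R := by
  induction s using Finset.induction_on with
  | empty => simpa [lnorm_zero] using hR
  | insert a s ha ih =>
    rw [Finset.sum_insert ha]
    exact lnorm_add_le (h a (by simp)) (ih fun i hi => h i (by simp [hi]))

lemma lnorm_prod {ι : Type*} (s : Finset ι) (f : ι → L 𝔽) :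
    lnorm (∏ i ∈ s, f i) = ∏ i ∈ s, lnorm (f i) := by
  induction s using Finset.induction_on with
  | empty => simp [lnorm_one]
  | insert a s ha ih => rw [Finset.prod_insert ha, Finset.prod_insert ha, lnorm_mul, ih]

lemma lnorm_neg_one_pow (i : ℕ) : lnorm ((-1 : L 𝔽) ^ i) = 1 := by
  rcases neg_one_pow_eq_or (L 𝔽) i with h | h <;> simp [h, lnorm_neg, lnorm_one]

lemma lnorm_det_le {w : ℕ} (N : Matrix (Fin w) (Fin w) (L 𝔽)) {R : ℝ} (hR : 0 ≤ R)
    (h : ∀ i j, lnorm (N i j) ≤ R) : lnorm N.det ≤ R ^ w := by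
  rw [Matrix.det_apply]
  refine lnorm_sum_le _ _ (pow_nonneg hR _) fun σ _ => ?_
  have : lnorm (Equiv.Perm.sign σ • ∏ i, N (σ i) i) = lnorm (∏ i, N (σ i) i) := by
    rcases Int.units_eq_one_or (Equiv.Perm.sign σ) with h | h <;> simp [h, lnorm_neg]
  rw [this, lnorm_prod]
  calc _ ≤ ∏ i : Fin w, R := Finset.prod_le_prod (fun i _ => lnorm_nonneg _) fun i _ => h _ _
    _ = R ^ w := by simp

/-- Discreteness of the value group. -/
lemma lnorm_discrete {x e : L 𝔽} (he : e ≠ 0)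
    (h : lnorm x < (Fintype.card 𝔽 : ℝ) * lnorm e) : lnorm x ≤ lnorm e := by
  by_cases hx : x = 0
  · rw [hx, lnorm_zero]; exact lnorm_nonneg e
  rw [lnorm_of_ne hx, lnorm_of_ne he] at *
  rw [← zpow_one_add₀ k_pos.ne', zpow_lt_zpow_iff_right₀ one_lt_k] at h
  exact zpow_le_zpow_right₀ one_lt_k.le (by omega)

lemma le_vnorm {ι : Type*} [Finite ι] (x : ι → L 𝔽) (i : ι) : lnorm (x i) ≤ vnorm x :=
  le_ciSup (f := fun i => lnorm (x i)) (Set.finite_range _).bddAbove i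

lemma mem_mball {m n : ℕ} (hm : 0 < m) (hn : 0 < n) {c A : Mat 𝔽 m n} {ρ : ℝ} :
    A ∈ mball c ρ ↔ ∀ i j, lnorm (A i j - c i j) ≤ ρ := by
  have : Nonempty (Fin m × Fin n) := ⟨(⟨0, hm⟩, ⟨0, hn⟩)⟩
  constructor
  · intro h i j
    exact (le_ciSup (f := fun p : Fin m × Fin n => lnorm ((A - c) p.1 p.2))
      (Set.finite_range _).bddAbove (i, j)).trans h
  · intro h
    exact ciSup_le fun p : Fin m × Fin n => h p.1 p.2

lemma lnorm_y_le {m n : ℕ} {y : Fin m → (Fin n ⊕ Fin m → L 𝔽)} (hy : OrthoSystem y)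
    (h : Fin m) (t : Fin n ⊕ Fin m) : lnorm (y h t) ≤ 1 := by
  have : Nonempty (Fin m) := ⟨h⟩
  have h2 := hy.2 (Pi.single h 1)
  have h3 : (fun r => ∑ h', (Pi.single h 1 : Fin m → L 𝔽) h' * y h' r) = y h := by
    funext r
    simp [Pi.single_apply]
  rw [h3] at h2
  refine (le_vnorm (y h) t).trans ?_
  rw [h2]
  refine ciSup_le fun i => ?_
  by_cases hi : i = h
  · subst hi; simp [lnorm_one]
  · simp [hi, lnorm_zero]

/-- The entries `y_i · C_j(Ā^*)`. -/
def Ent {m n : ℕ} (y : Fin m → (Fin n ⊕ Fin m → L 𝔽)) (A : Mat 𝔽 m n) (i j : Fin m) : L 𝔽 :=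
  dotL (y i) fun t => AbarStar A t (Sum.inl j)

lemma Ent_eq {m n : ℕ} (y : Fin m → (Fin n ⊕ Fin m → L 𝔽)) (A : Mat 𝔽 m n) (i j : Fin m) :
    Ent y A i j = ∑ t, y i (Sum.inl t) * A j t + y i (Sum.inr j) := by
  simp [Ent, dotL, AbarStar, Matrix.one_apply]

lemma Ent_sub_le {m n : ℕ} {y : Fin m → (Fin n ⊕ Fin m → L 𝔽)} (hy : OrthoSystem y)
    (A A' : Mat 𝔽 m n) (i j : Fin m) {s : ℝ} (hs : 0 ≤ s)
    (h : ∀ t, lnorm (A j t - A' j t) ≤ s) : lnorm (Ent y A i j - Ent y A' i j) ≤ s := by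
  have : Ent y A i j - Ent y A' i j = ∑ t, y i (Sum.inl t) * (A j t - A' j t) := by
    simp only [Ent_eq, mul_sub, Finset.sum_sub_distrib]; ring
  rw [this]
  refine lnorm_sum_le _ _ hs fun t _ => ?_
  rw [lnorm_mul]
  calc _ ≤ 1 * s := mul_le_mul (lnorm_y_le hy _ _) (h t) (lnorm_nonneg _) zero_le_one
    _ = s := one_mul s

lemma MvVec_eq {m n : ℕ} (y : Fin m → (Fin n ⊕ Fin m → L 𝔽)) (w : ℕ) (A : Mat 𝔽 m n)
    (p : IncTuple w m × IncTuple w m) :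
    MvVec y w A p = Matrix.det (Matrix.of fun r s : Fin w => Ent y A (p.1.1 r) (p.2.1 s)) := rfl

instance (w m : ℕ) : Finite (IncTuple w m) :=
  inferInstanceAs (Finite {f : Fin w → Fin m // StrictMono f})

lemma nonempty_IncTuple {w m : ℕ} (h : w ≤ m) : Nonempty (IncTuple w m) :=
  ⟨⟨Fin.castLE h, Fin.strictMono_castLE h⟩⟩

lemma MvNorm_nonneg {m n : ℕ} (y : Fin m → (Fin n ⊕ Fin m → L 𝔽)) (w : ℕ) (A : Mat 𝔽 m n) :
    0 ≤ MvNorm y w A := Real.iSup_nonneg fun _ => lnorm_nonneg _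

lemma MvSet_nonneg {m n : ℕ} (y : Fin m → (Fin n ⊕ Fin m → L 𝔽)) (w : ℕ)
    (K : Set (Mat 𝔽 m n)) : 0 ≤ MvSet y w K := by
  apply Real.sSup_nonneg
  rintro r ⟨A, _, rfl⟩
  exact MvNorm_nonneg _ _ _

lemma bdd_Mv {m n : ℕ} (hm : 0 < m) (hn : 0 < n)
    {y : Fin m → (Fin n ⊕ Fin m → L 𝔽)} (hy : OrthoSystem y) (w : ℕ)
    (c : Mat 𝔽 m n) (ρ : ℝ) :
    BddAbove {r : ℝ | ∃ A ∈ mball c ρ, r = MvNorm y w A} := by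
  obtain ⟨C, hC⟩ := (Set.finite_range fun p : Fin m × Fin m => lnorm (Ent y c p.1 p.2)).bddAbove
  refine ⟨(max (max C ρ) 0) ^ w, ?_⟩
  rintro r ⟨A, hA, rfl⟩
  rw [mem_mball hm hn] at hA
  refine Real.iSup_le (fun p => ?_) (pow_nonneg (le_max_right _ _) _)
  rw [MvVec_eq]
  refine lnorm_det_le _ (le_max_right _ _) fun i j => ?_
  have h1 := Ent_sub_le hy A c (p.1.1 i) (p.2.1 j) (le_max_right (max C ρ) 0)
    fun t => (hA _ t).trans ((le_max_right C ρ).trans (le_max_left _ _))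
  have h2 : lnorm (Ent y c (p.1.1 i) (p.2.1 j)) ≤ max (max C ρ) 0 :=
    (hC ⟨(p.1.1 i, p.2.1 j), rfl⟩).trans ((le_max_left C ρ).trans (le_max_left _ _))
  have := lnorm_add_le h1 h2
  simpa using this

lemma MvVec_le_MvSet {m n : ℕ} (hm : 0 < m) (hn : 0 < n)
    {y : Fin m → (Fin n ⊕ Fin m → L 𝔽)} (hy : OrthoSystem y) (w : ℕ)
    {c : Mat 𝔽 m n} {ρ : ℝ} {A : Mat 𝔽 m n} (hA : A ∈ mball c ρ)
    (p : IncTuple w m × IncTuple w m) : lnorm (MvVec y w A p) ≤ MvSet y w (mball c ρ) :=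
  (le_vnorm (MvVec y w A) p).trans (le_csSup (bdd_Mv hm hn hy w c ρ) ⟨A, hA, rfl⟩)

lemma step_row {m n : ℕ} (hm : 0 < m) (hn : 0 < n)
    {y : Fin m → (Fin n ⊕ Fin m → L 𝔽)} (hy : OrthoSystem y) (w : ℕ)
    {c : Mat 𝔽 m n} {ρ : ℝ} {A A' : Mat 𝔽 m n} (hA : A ∈ mball c ρ)
    (j : Fin m) (hj : ∀ i, i ≠ j → ∀ t, A i t = A' i t) {s : ℝ} (hs : 0 ≤ s)
    (h : ∀ t, lnorm (A j t - A' j t) ≤ s)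
    (p : IncTuple (w + 1) m × IncTuple (w + 1) m) :
    lnorm (MvVec y (w + 1) A p - MvVec y (w + 1) A' p) ≤ s * MvSet y w (mball c ρ) := by
  have hE : ∀ a b, b ≠ j → Ent y A a b = Ent y A' a b := by
    intro a b hb
    simp only [Ent_eq, hj b hb]
  have hsM : 0 ≤ s * MvSet y w (mball c ρ) := mul_nonneg hs (MvSet_nonneg _ _ _)
  by_cases hp : ∃ s0, p.2.1 s0 = j
  · obtain ⟨s0, hs0⟩ := hp
    have hne : ∀ b, p.2.1 (s0.succAbove b) ≠ j := by
      intro b hb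
      rw [← hs0] at hb
      exact Fin.succAbove_ne s0 b (p.2.2.injective hb)
    rw [MvVec_eq, MvVec_eq, Matrix.det_succ_column _ s0, Matrix.det_succ_column _ s0,
      ← Finset.sum_sub_distrib]
    refine lnorm_sum_le _ _ hsM fun i _ => ?_
    have hmin : (Matrix.of fun r s : Fin (w + 1) => Ent y A' (p.1.1 r) (p.2.1 s)).submatrix
        i.succAbove s0.succAbove =
        (Matrix.of fun r s : Fin (w + 1) => Ent y A (p.1.1 r) (p.2.1 s)).submatrix
        i.succAbove s0.succAbove := by
      ext a b : 2
      simp only [Matrix.submatrix_apply, Matrix.of_apply]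
      rw [hE _ _ (hne b)]
    rw [hmin]
    have hq := MvVec_le_MvSet hm hn hy w hA
      (⟨⟨fun a => p.1.1 (i.succAbove a), p.1.2.comp (Fin.strictMono_succAbove i)⟩,
        ⟨fun a => p.2.1 (s0.succAbove a), p.2.2.comp (Fin.strictMono_succAbove s0)⟩⟩ :
        IncTuple w m × IncTuple w m)
    rw [← sub_mul, ← mul_sub, lnorm_mul, lnorm_mul, lnorm_neg_one_pow, one_mul]
    refine mul_le_mul ?_ hq (lnorm_nonneg _) hs
    simp only [Matrix.of_apply]
    rw [hs0]
    exact Ent_sub_le hy A A' _ j hs h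
  · push Not at hp
    have : MvVec y (w + 1) A p = MvVec y (w + 1) A' p := by
      rw [MvVec_eq, MvVec_eq]
      congr 1
      ext a b
      simp only [Matrix.of_apply]
      rw [hE _ _ (hp b)]
    rw [this, sub_self, lnorm_zero]
    exact hsM

lemma diff_le {m n : ℕ} (hm : 0 < m) (hn : 0 < n)
    {y : Fin m → (Fin n ⊕ Fin m → L 𝔽)} (hy : OrthoSystem y) (w : ℕ)
    {c : Mat 𝔽 m n} {ρ : ℝ} {A A' : Mat 𝔽 m n} (hA : A ∈ mball c ρ) (hA' : A' ∈ mball c ρ)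
    {s : ℝ} (hs : 0 ≤ s) (h : ∀ i t, lnorm (A i t - A' i t) ≤ s)
    (p : IncTuple (w + 1) m × IncTuple (w + 1) m) :
    lnorm (MvVec y (w + 1) A p - MvVec y (w + 1) A' p) ≤ s * MvSet y w (mball c ρ) := by
  let Z : Finset (Fin m) → Mat 𝔽 m n := fun S i t => if i ∈ S then A i t else A' i t
  have key : ∀ S : Finset (Fin m), lnorm (MvVec y (w + 1) (Z S) p - MvVec y (w + 1) A' p)
      ≤ s * MvSet y w (mball c ρ) := by
    intro S
    induction S using Finset.induction_on with
    | empty =>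
      have : Z ∅ = A' := by ext i t; simp [Z]
      rw [this, sub_self, lnorm_zero]
      exact mul_nonneg hs (MvSet_nonneg _ _ _)
    | insert a S ha ih =>
      have hZ : Z (insert a S) ∈ mball c ρ := by
        rw [mem_mball hm hn] at *
        intro i t
        by_cases hi : i ∈ insert a S
        · simpa only [Z, hi, if_true] using hA i t
        · simpa only [Z, hi, if_false] using hA' i t
      have h1 := step_row hm hn hy w (A' := Z S) hZ a
        (by intro i hi t; simp [Z, hi]) hs (by intro t; simpa [Z, ha] using h a t) p
      have := lnorm_add_le h1 ih
      simpa using this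
  have hu : Z Finset.univ = A := by ext i t; simp [Z]
  have := key Finset.univ
  rwa [hu] at this

lemma radius_lt {m n : ℕ} (hm : 0 < m) (hn : 0 < n) {c c₀ : Mat 𝔽 m n} {ρ ρ₀ : ℝ}
    (hρ : 0 < ρ) (hsub : mball c ρ ⊆ mball c₀ ρ₀) :
    ρ < (Fintype.card 𝔽 : ℝ) * ρ₀ := by
  obtain ⟨j, hj1, hj2⟩ := exists_mem_Ico_zpow hρ (one_lt_k (𝔽 := 𝔽))
  let x : L 𝔽 := HahnSeries.single (-j) 1
  have hx0 : x ≠ 0 := by simp [x]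
  have hx : lnorm x = (Fintype.card 𝔽 : ℝ) ^ j := by
    rw [lnorm_of_ne hx0]
    simp only [x]
    rw [HahnSeries.order_single one_ne_zero, neg_neg]
  have h1 : c ∈ mball c₀ ρ₀ := hsub ((mem_mball hm hn).2 fun i t => by
    simpa [lnorm_zero] using hρ.le)
  have h2 : (c + Matrix.of fun _ _ => x) ∈ mball c₀ ρ₀ := hsub ((mem_mball hm hn).2 fun i t => by
    simp only [Matrix.add_apply, Matrix.of_apply, add_sub_cancel_left]
    rw [hx]; exact hj1)
  have h3 := lnorm_sub_le ((mem_mball hm hn).1 h2 ⟨0, hm⟩ ⟨0, hn⟩)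
    ((mem_mball hm hn).1 h1 ⟨0, hm⟩ ⟨0, hn⟩)
  simp only [Matrix.add_apply, Matrix.of_apply, sub_sub_sub_cancel_right,
    add_sub_cancel_left] at h3
  rw [hx] at h3
  calc ρ < (Fintype.card 𝔽 : ℝ) ^ (j + 1) := hj2
    _ = (Fintype.card 𝔽 : ℝ) * (Fintype.card 𝔽 : ℝ) ^ j := by
      rw [zpow_add_one₀ k_pos.ne', mul_comm]
    _ ≤ _ := mul_le_mul_of_nonneg_left h3 k_pos.le

end helpers

/-- **Theorem (Statement 8).** (Corollary `finite1`.)  If `‖M_{v-1}‖` is large on a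
ball `B''`, then on any ball `B' ⊆ B''` of radius `< (1/2) μ_{v-1} ρ(B'')` one has
`‖M_{v-1}(A')‖_∞ > (1/2) M_{v-1}(B')` for every `A' ∈ B'`. -/
theorem Mv_stays_large (𝔽 : Type) [Field 𝔽] [Fintype 𝔽] (m n : ℕ)
    (hm : 0 < m) (hn : 0 < n)
    (y : Fin m → (Fin n ⊕ Fin m → L 𝔽)) (hy : OrthoSystem y)
    (v : ℕ) (hv1 : 1 ≤ v) (hv : v ≤ m)
    (c₀ : Mat 𝔽 m n) (ρ₀ : ℝ) (μprev : ℝ) (hμprev : 0 < μprev)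
    (c'' : Mat 𝔽 m n) (ρ'' : ℝ) (hsub'' : mball c'' ρ'' ⊆ mball c₀ ρ₀)
    (hbig : ∀ A ∈ mball c'' ρ'',
      ρ₀ * μprev * MvSet y (v - 2) (mball c'' ρ'') < MvNorm y (v - 1) A)
    (c' : Mat 𝔽 m n) (ρ' : ℝ) (hρ' : ρ' < (1 / 2) * μprev * ρ'')
    (hsub' : mball c' ρ' ⊆ mball c'' ρ'')
    (A' : Mat 𝔽 m n) (hA' : A' ∈ mball c' ρ') :
    (1 / 2) * MvSet y (v - 1) (mball c' ρ') < MvNorm y (v - 1) A' := by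
  have : Nonempty (IncTuple (v - 1) m) := nonempty_IncTuple (by omega)
  have hA'' := hsub' hA'
  have hρ₀ : 0 ≤ ρ₀ :=
    (lnorm_nonneg _).trans ((mem_mball hm hn).1 (hsub'' hA'') ⟨0, hm⟩ ⟨0, hn⟩)
  have hN : 0 < MvNorm y (v - 1) A' :=
    lt_of_le_of_lt (mul_nonneg (mul_nonneg hρ₀ hμprev.le) (MvSet_nonneg _ _ _)) (hbig A' hA'')
  suffices hle : MvSet y (v - 1) (mball c' ρ') ≤ MvNorm y (v - 1) A' by linarith
  refine csSup_le ⟨_, A', hA', rfl⟩ ?_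
  rintro r ⟨A, hA, rfl⟩
  refine ciSup_le fun p => ?_
  obtain ⟨q, hq⟩ := exists_eq_ciSup_of_finite (f := fun i => lnorm (MvVec y (v - 1) A' i))
  have hq' : lnorm (MvVec y (v - 1) A' q) = MvNorm y (v - 1) A' := hq
  have hb := hbig A' hA''
  have hq0 : MvVec y (v - 1) A' q ≠ 0 := by
    intro h0
    rw [h0, lnorm_zero] at hq'
    exact hN.ne hq'
  have hD : lnorm (MvVec y (v - 1) A p - MvVec y (v - 1) A' p) ≤ MvNorm y (v - 1) A' := by
    rw [← hq']
    apply lnorm_discrete hq0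
    rw [hq']
    obtain rfl | ⟨w, rfl⟩ : v = 1 ∨ ∃ w, v = w + 2 := by
      rcases Nat.lt_or_ge v 2 with h | h
      · left; omega
      · right; exact ⟨v - 2, by omega⟩
    · have : MvVec y (1 - 1) A p = MvVec y (1 - 1) A' p := by
        rw [MvVec_eq, MvVec_eq]
        exact (Matrix.det_fin_zero).trans (Matrix.det_fin_zero).symm
      rw [this, sub_self, lnorm_zero]
      exact mul_pos k_pos hN
    · have e1 : w + 2 - 1 = w + 1 := rfl
      have e2 : w + 2 - 2 = w := rfl
      simp only [e1, e2] at *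
      have hρ'0 : 0 ≤ ρ' :=
        (lnorm_nonneg _).trans ((mem_mball hm hn).1 hA ⟨0, hm⟩ ⟨0, hn⟩)
      have hρ''0 : 0 < ρ'' := by
        by_contra hcon
        push Not at hcon
        have := mul_nonneg hμprev.le (neg_nonneg.2 hcon)
        linarith
      have hd := diff_le hm hn hy w (hsub' hA) hA'' hρ'0 (fun i t => by
        have := lnorm_sub_le ((mem_mball hm hn).1 hA i t) ((mem_mball hm hn).1 hA' i t)
        simpa using this) p
      have hr := radius_lt hm hn hρ''0 hsub''
      have hM := MvSet_nonneg y w (mball c'' ρ'')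
      have hk := k_pos (𝔽 := 𝔽)
      refine hd.trans_lt ?_
      have h1 : ρ' ≤ (Fintype.card 𝔽 : ℝ) * (ρ₀ * μprev) := by
        have := mul_lt_mul_of_pos_left hr hμprev
        have := mul_pos hμprev hρ''0
        linarith
      calc ρ' * MvSet y w (mball c'' ρ'')
          ≤ (Fintype.card 𝔽 : ℝ) * (ρ₀ * μprev) * MvSet y w (mball c'' ρ'') :=
            mul_le_mul_of_nonneg_right h1 hM
        _ = (Fintype.card 𝔽 : ℝ) * (ρ₀ * μprev * MvSet y w (mball c'' ρ'')) := by ring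
        _ < _ := mul_lt_mul_of_pos_left hb hk
  have := lnorm_add_le hD (le_vnorm (MvVec y (v - 1) A') p)
  simpa using this

end FSBad
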